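/- arXiv:2512.09671 — 3 statements merged into one kernel-verified Lean document; each statement's English description precedes it below -/
import Mathlib

section
/- For all p₁, p₂ ∈ ℝᵈ and all real numbers m₁, m₂, the monotonicity quantity associated with the Hamiltonian H(p,m) = ‖p‖² − m satisfies the algebraic identity (−(‖p₁‖² − m₁) + (‖p₂‖² − m₂))·(m₁ − m₂) + ⟪m₁·(2p₁) − m₂·(2p₂), p₁ − p₂⟫ = (m₁ − m₂)² + (m₁ + m₂)·‖p₁ − p₂‖². -/
open scoped RealInnerProductSpace

/-- For all `p₁, p₂ ∈ ℝᵈ` and real `m₁, m₂`, the monotonicity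
quantity of the Hamiltonian `H(p,m) = ‖p‖² - m` (whose gradient in `p` is `2p`)
satisfies the algebraic identity
`(-(‖p₁‖²-m₁) + (‖p₂‖²-m₂))(m₁-m₂) + ⟪m₁•(2•p₁) - m₂•(2•p₂), p₁-p₂⟫
  = (m₁-m₂)² + (m₁+m₂)‖p₁-p₂‖²`. -/
theorem monotonicity_identity_quadratic_hamiltonian
    (d : ℕ) (p₁ p₂ : EuclideanSpace ℝ (Fin d)) (m₁ m₂ : ℝ) :
    (-(‖p₁‖ ^ 2 - m₁) + (‖p₂‖ ^ 2 - m₂)) * (m₁ - m₂)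
      + ⟪m₁ • ((2 : ℝ) • p₁) - m₂ • ((2 : ℝ) • p₂), p₁ - p₂⟫
      = (m₁ - m₂) ^ 2 + (m₁ + m₂) * ‖p₁ - p₂‖ ^ 2 := by
  rw [norm_sub_sq_real]
  simp only [inner_sub_left, inner_sub_right, real_inner_smul_left, real_inner_self_eq_norm_sq,
    real_inner_comm p₁ p₂]
  ring
end

section
/- Let p₁, p₂ ∈ ℝᵈ and m₁, m₂ ≥ 0 be real numbers, and set Q = (−(‖p₁‖² − m₁) + (‖p₂‖² − m₂))·(m₁ − m₂) + ⟪m₁·(2p₁) − m₂·(2p₂), p₁ − p₂⟫. Then Q ≥ 0. Moreover, if Q = 0 then m₁ = m₂, and if in addition m₁ + m₂ > 0 then also p₁ = p₂. Consequently, if (p₁, m₁) ≠ (p₂, m₂) and m₁ + m₂ > 0, then Q > 0. -/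
open scoped RealInnerProductSpace

/-- For `p₁, p₂ ∈ ℝᵈ` and `m₁, m₂ ≥ 0`, the monotonicity
quantity `Q` of the Hamiltonian `H(p,m) = ‖p‖² - m` is nonnegative; if `Q = 0`
then `m₁ = m₂` and, when moreover `m₁ + m₂ > 0`, also `p₁ = p₂`.  Consequently
`Q > 0` whenever `(p₁, m₁) ≠ (p₂, m₂)` and `m₁ + m₂ > 0`. -/
theorem monotonicity_H2_quadratic_hamiltonian
    (d : ℕ) (p₁ p₂ : EuclideanSpace ℝ (Fin d)) (m₁ m₂ : ℝ)
    (hm₁ : 0 ≤ m₁) (hm₂ : 0 ≤ m₂) (Q : ℝ)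
    (hQ : Q = (-(‖p₁‖ ^ 2 - m₁) + (‖p₂‖ ^ 2 - m₂)) * (m₁ - m₂)
      + ⟪m₁ • ((2 : ℝ) • p₁) - m₂ • ((2 : ℝ) • p₂), p₁ - p₂⟫) :
    0 ≤ Q ∧
    (Q = 0 → m₁ = m₂ ∧ (0 < m₁ + m₂ → p₁ = p₂)) ∧
    ((p₁, m₁) ≠ (p₂, m₂) → 0 < m₁ + m₂ → 0 < Q) := by
  -- Completing the square: every claim is read off from this sum of nonnegative terms.
  have key : Q = (m₁ - m₂) ^ 2 + (m₁ + m₂) * ‖p₁ - p₂‖ ^ 2 := by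
    rw [hQ, norm_sub_sq_real]
    simp only [inner_sub_left, inner_sub_right, real_inner_smul_left,
      real_inner_self_eq_norm_sq, real_inner_comm p₁ p₂]
    ring
  have h₁ : 0 ≤ (m₁ - m₂) ^ 2 := sq_nonneg _
  have h₂ : 0 ≤ (m₁ + m₂) * ‖p₁ - p₂‖ ^ 2 := by positivity
  have hnonneg : 0 ≤ Q := by rw [key]; exact add_nonneg h₁ h₂
  have hzero : Q = 0 → m₁ = m₂ ∧ (0 < m₁ + m₂ → p₁ = p₂) := by
    intro h0
    have hm : (m₁ - m₂) ^ 2 = 0 := by linarith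
    have hp : (m₁ + m₂) * ‖p₁ - p₂‖ ^ 2 = 0 := by linarith
    refine ⟨sub_eq_zero.mp (pow_eq_zero_iff two_ne_zero |>.mp hm), fun hpos => ?_⟩
    have hn := (mul_eq_zero.mp hp).resolve_left hpos.ne'
    exact sub_eq_zero.mp (norm_eq_zero.mp (pow_eq_zero_iff two_ne_zero |>.mp hn))
  refine ⟨hnonneg, hzero, fun hne hpos => lt_of_le_of_ne hnonneg fun h0 => hne ?_⟩
  obtain ⟨hm, hp⟩ := hzero h0.symm
  rw [hm, hp hpos]
end

section
/- (Uniqueness for the quadratic mean field game with classical solutions.) Let d ≥ 1 and let V : ℝᵈ → ℝ be continuous and ℤᵈ-periodic. For i = 1, 2, let u_i : ℝᵈ → ℝ be C² and ℤᵈ-periodic and let m_i : ℝᵈ → ℝ be C¹ and ℤᵈ-periodic with m_i ≥ 0 and ∫_{[0,1]ᵈ} m_i(x) dx = 1, and suppose that for all x ∈ ℝᵈ: −u_i(x) − ‖∇u_i(x)‖² − V(x) + m_i(x) = 0 and m_i(x) − div(m_i ∇u_i)(x) = 1. Then m₁ = m₂ and u₁ = u₂ on ℝᵈ. -/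
/-!
Put `w = u₁ - u₂`, `δ = m₁ - m₂` and `G = m₁ ∇u₁ - m₂ ∇u₂`. Subtracting the equations gives

* `δ = w + ⟪∇u₁ + ∇u₂, ∇w⟫`,
* `div G = δ`, where `G = ½ δ (∇u₁ + ∇u₂) + ½ (m₁ + m₂) ∇w`.

The transport equation carries the velocity `∇u` and not the derivative `2 ∇u` of `‖p‖²`, so testing
`div G = δ` with `w` does not produce a quantity with a sign. The test function that
works is `|w| w`, whose gradient is `2 |w| ∇w`:

`div (|w| w G) = |w| w δ + 2 |w| ⟪∇w, G⟫ = |w| (δ² + (m₁ + m₂) ‖∇w‖²)`.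

The left side has zero integral over the unit cube by the divergence theorem and periodicity
(`integral_ediv_eq_zero`), so the nonnegative continuous right side vanishes identically
(`eq_zero_of_integral_unitCube_eq_zero`). The density `m₁` is strictly positive, because at a zero,
which is a minimum, the transport equation would read `0 = 1` (`density_pos`). Hence `∇w = 0` and
`δ = 0` wherever `w ≠ 0`, which contradicts the first equation; so `w = 0`, and the
Hamilton–Jacobi equations give `m₁ = m₂`.
-/

open MeasureTheory

/-- A function on `ℝᵈ` (as `EuclideanSpace ℝ (Fin d)`) is `ℤᵈ`-periodic if it
is invariant under translation by every integer vector. -/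
def ZdPeriodic {d : ℕ} {α : Type*} (f : EuclideanSpace ℝ (Fin d) → α) : Prop :=
  ∀ (x : EuclideanSpace ℝ (Fin d)) (k : Fin d → ℤ),
    f (x + (EuclideanSpace.equiv (Fin d) ℝ).symm (fun i => (k i : ℝ))) = f x

/-- The divergence of a vector field on `ℝᵈ`, defined as the trace of its
Jacobian (Fréchet derivative). -/
noncomputable def ediv {d : ℕ}
    (F : EuclideanSpace ℝ (Fin d) → EuclideanSpace ℝ (Fin d))
    (x : EuclideanSpace ℝ (Fin d)) : ℝ :=
  LinearMap.trace ℝ (EuclideanSpace ℝ (Fin d))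
    (fderiv ℝ F x : EuclideanSpace ℝ (Fin d) →ₗ[ℝ] EuclideanSpace ℝ (Fin d))

/-- The unit cube `[0,1]ᵈ` in `ℝᵈ`. -/
def unitCube (d : ℕ) : Set (EuclideanSpace ℝ (Fin d)) :=
  {x | ∀ i, x i ∈ Set.Icc (0 : ℝ) 1}

namespace QuadraticMFG

variable {d : ℕ}

local notation "𝔼" d => EuclideanSpace ℝ (Fin d)

/-! ### Integration of periodic functions over the unit cube -/

lemma integral_unitCube (f : (𝔼 d) → ℝ) :
    ∫ x in unitCube d, f x
      = ∫ y in Set.Icc (0 : Fin d → ℝ) 1, f (WithLp.toLp 2 y) := by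
  have h := (PiLp.volume_preserving_toLp (Fin d)).setIntegral_preimage_emb
    (MeasurableEquiv.toLp 2 (Fin d → ℝ)).measurableEmbedding f (unitCube d)
  rw [← h]
  congr 2
  ext y
  simp [unitCube, Pi.le_def, forall_and]

lemma ediv_eq_sum (F : (𝔼 d) → 𝔼 d) (x : 𝔼 d) :
    ediv F x = ∑ i, (fderiv ℝ F x (EuclideanSpace.single i 1)) i := by
  rw [ediv, LinearMap.trace_eq_sum_inner _ (EuclideanSpace.basisFun (Fin d) ℝ)]
  refine Finset.sum_congr rfl fun i _ => ?_
  simp [EuclideanSpace.inner_single_left]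

lemma continuous_ediv {F : (𝔼 d) → 𝔼 d} (hF : ContDiff ℝ 1 F) : Continuous (ediv F) := by
  have h : ediv F = fun x => ∑ i, (fderiv ℝ F x (EuclideanSpace.single i 1)) i :=
    funext (ediv_eq_sum F)
  have h' : Continuous (fderiv ℝ F) := hF.continuous_fderiv one_ne_zero
  rw [h]
  fun_prop

/-- Opposite faces of the cube contribute equal boundary terms for a periodic field. -/
lemma integral_ediv_eq_zero {F : (𝔼 d) → 𝔼 d} (hF : ContDiff ℝ 1 F) (hper : ZdPeriodic F) :
    ∫ x in unitCube d, ediv F x = 0 := by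
  cases d with
  | zero =>
    have h : ediv F = 0 := by
      ext x
      simp [ediv_eq_sum]
    simp [h]
  | succ n =>
    rw [integral_unitCube]
    let e : (Fin (n + 1) → ℝ) →L[ℝ] 𝔼 (n + 1) :=
      ((EuclideanSpace.equiv (Fin (n + 1)) ℝ).symm : _ →L[ℝ] _)
    have he : ∀ y, e y = WithLp.toLp 2 y := fun y => rfl
    have hdiv := integral_divergence_of_hasFDerivAt_off_countable' (E := ℝ)
      (0 : Fin (n + 1) → ℝ) 1 zero_le_one
      (fun i y => F (e y) i)
      (fun i y => (EuclideanSpace.proj i : (𝔼 (n + 1)) →L[ℝ] ℝ).comp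
        ((fderiv ℝ F (e y)).comp e)) ∅ Set.countable_empty ?_ ?_ ?_
    · have hsum : ∀ y, ediv F (WithLp.toLp 2 y) = ∑ i,
          ((EuclideanSpace.proj i : (𝔼 (n + 1)) →L[ℝ] ℝ).comp
            ((fderiv ℝ F (e y)).comp e)) (Pi.single i 1) := by
        intro y
        rw [ediv_eq_sum]
        rfl
      simp_rw [hsum]
      rw [hdiv]
      refine Finset.sum_eq_zero fun i _ => ?_
      rw [sub_eq_zero]
      refine integral_congr_ae (Filter.Eventually.of_forall fun y => ?_)
      have hk := hper (e (i.insertNth 0 y)) (Pi.single i 1)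
      have harg : e (i.insertNth 0 y)
          + (EuclideanSpace.equiv (Fin (n + 1)) ℝ).symm
            (fun j => ((Pi.single i 1 : Fin (n + 1) → ℤ) j : ℝ))
          = e (i.insertNth 1 y) := by
        change e _ + e _ = e _
        rw [← map_add]
        congr 1
        ext j
        refine Fin.succAboveCases i ?_ (fun j => ?_) j
        · simp
        · simp [Fin.succAbove_ne]
      rw [harg] at hk
      simp only [Pi.zero_apply, Pi.one_apply]
      rw [hk]
    · intro i
      have := hF.continuous
      fun_prop
    · intro y _ i
      have h1 : HasFDerivAt F (fderiv ℝ F (e y)) (e y) :=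
        (hF.differentiable one_ne_zero _).hasFDerivAt
      exact (EuclideanSpace.proj i : (𝔼 (n + 1)) →L[ℝ] ℝ).hasFDerivAt.comp y
        (h1.comp y e.hasFDerivAt)
    · refine ContinuousOn.integrableOn_Icc (Continuous.continuousOn ?_)
      have h' : Continuous (fderiv ℝ F) := hF.continuous_fderiv one_ne_zero
      simp only [ContinuousLinearMap.comp_apply]
      fun_prop

/-- Every point has an integer translate in the unit cube. -/
lemma eq_zero_of_eqOn_unitCube {f : (𝔼 d) → ℝ} (hper : ZdPeriodic f)
    (h : ∀ x ∈ unitCube d, f x = 0) (x : 𝔼 d) : f x = 0 := by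
  rw [← hper x (fun i => -⌊x i⌋)]
  apply h
  intro i
  have h1 := Int.floor_le (x i)
  have h2 := (Int.lt_floor_add_one (x i)).le
  simp only [PiLp.add_apply, Int.cast_neg]
  change x i + -(⌊x i⌋ : ℝ) ∈ _
  constructor <;> linarith

lemma eq_zero_of_integral_unitCube_eq_zero {f : (𝔼 d) → ℝ} (hf : Continuous f)
    (hper : ZdPeriodic f) (h0 : ∀ x, 0 ≤ f x) (hint : ∫ x in unitCube d, f x = 0) (x : 𝔼 d) :
    f x = 0 := by
  refine eq_zero_of_eqOn_unitCube hper (fun x hx => ?_) x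
  rw [integral_unitCube] at hint
  have hc : Continuous fun y : Fin d → ℝ => f (WithLp.toLp 2 y) :=
    hf.comp (PiLp.continuous_toLp 2 _)
  rw [setIntegral_eq_zero_iff_of_nonneg_ae (Filter.Eventually.of_forall fun y => h0 _)
    hc.continuousOn.integrableOn_Icc] at hint
  have hcl : Set.Icc (0 : Fin d → ℝ) 1 ⊆ closure (interior (Set.Icc 0 1)) := by
    rw [← Set.pi_univ_Icc, interior_pi_set Set.finite_univ, closure_pi_set]
    simp
  have := Measure.eqOn_of_ae_eq hint hc.continuousOn continuousOn_const hcl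
    (x := WithLp.ofLp x) ⟨fun i => (hx i).1, fun i => (hx i).2⟩
  simpa using this

/-! ### Calculus of gradients and divergences -/

lemma contDiff_gradient {u : (𝔼 d) → ℝ} (hu : ContDiff ℝ 2 u) : ContDiff ℝ 1 (gradient u) :=
  (InnerProductSpace.toDual ℝ (𝔼 d)).symm.contDiff.comp
    (hu.fderiv_right (m := 1) (by norm_num))

lemma periodic_gradient {u : (𝔼 d) → ℝ} (hu : ZdPeriodic u) : ZdPeriodic (gradient u) := by
  intro x k
  unfold gradient
  rw [← fderiv_comp_add_right]
  congr 2
  exact funext fun y => hu y k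

lemma ediv_smul {v : (𝔼 d) → ℝ} {F : (𝔼 d) → 𝔼 d} {x : 𝔼 d}
    (hv : DifferentiableAt ℝ v x) (hF : DifferentiableAt ℝ F x) :
    ediv (fun y => v y • F y) x = v x * ediv F x + fderiv ℝ v x (F x) := by
  have htr := LinearMap.trace_smulRight (fderiv ℝ v x : (𝔼 d) →ₗ[ℝ] ℝ) (F x)
  unfold ediv
  rw [fderiv_fun_smul hv hF, ContinuousLinearMap.toLinearMap_add, map_add,
    ContinuousLinearMap.toLinearMap_smul, map_smul, smul_eq_mul]
  congr 1

lemma ediv_sub {F G : (𝔼 d) → 𝔼 d} {x : 𝔼 d}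
    (hF : DifferentiableAt ℝ F x) (hG : DifferentiableAt ℝ G x) :
    ediv (fun y => F y - G y) x = ediv F x - ediv G x := by
  unfold ediv
  rw [fderiv_fun_sub hF hG, ContinuousLinearMap.toLinearMap_sub, map_sub]

lemma hasDerivAt_abs_mul_self (t : ℝ) : HasDerivAt (fun s : ℝ => |s| * s) (2 * |t|) t := by
  rcases lt_trichotomy t 0 with ht | rfl | ht
  · have h := (hasDerivAt_abs_neg ht).mul (hasDerivAt_id t)
    refine h.congr_deriv ?_
    simp only [id, abs_of_neg ht]
    ring
  · rw [hasDerivAt_iff_tendsto_slope]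
    have h : Filter.Tendsto (fun s : ℝ => |s|) (nhdsWithin 0 {0}ᶜ) (nhds (2 * |(0 : ℝ)|)) := by
      have := (continuous_abs (G := ℝ)).tendsto 0
      simp only [abs_zero, mul_zero] at this ⊢
      exact this.mono_left nhdsWithin_le_nhds
    refine h.congr' ?_
    filter_upwards [self_mem_nhdsWithin] with s hs
    have hs' : s ≠ 0 := hs
    simp [slope_def_field, hs']
  · have h := (hasDerivAt_abs_pos ht).mul (hasDerivAt_id t)
    refine h.congr_deriv ?_
    simp only [id, abs_of_pos ht]
    ring

lemma contDiff_abs_mul_self : ContDiff ℝ 1 (fun s : ℝ => |s| * s) := by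
  rw [contDiff_one_iff_deriv]
  refine ⟨fun t => (hasDerivAt_abs_mul_self t).differentiableAt, ?_⟩
  rw [funext fun t => (hasDerivAt_abs_mul_self t).deriv]
  fun_prop

/-- At a zero of `m ≥ 0` also `∇m = 0`, so `div (m ∇u) = 0` there. -/
lemma density_pos {u m : (𝔼 d) → ℝ} (hu : ContDiff ℝ 2 u) (hm : ContDiff ℝ 1 m)
    (hm0 : ∀ x, 0 ≤ m x) (hFP : ∀ x, m x - ediv (fun y => m y • gradient u y) x = 1) (x : 𝔼 d) :
    0 < m x := by
  refine (hm0 x).lt_of_ne' fun hx => ?_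
  have hmin : IsLocalMin m x := Filter.Eventually.of_forall fun y => by rw [hx]; exact hm0 y
  have h := hFP x
  rw [ediv_smul (hm.differentiable one_ne_zero x)
    ((contDiff_gradient hu).differentiable one_ne_zero x), hmin.fderiv_eq_zero, hx] at h
  simp at h

/-- The expansion of `div (|w| w G)` at a point, with `p = ∇u₁`, `q = ∇u₂`, `δ = m - n`. -/
lemma pointwise_identity {E : Type*} [NormedAddCommGroup E] [InnerProductSpace ℝ E]
    (p q : E) (m n w : ℝ) (hw : w = (m - n) - (‖p‖ ^ 2 - ‖q‖ ^ 2)) :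
    |w| * w * (m - n) + 2 * |w| * inner ℝ (p - q) (m • p - n • q)
      = |w| * ((m - n) ^ 2 + (m + n) * ‖p - q‖ ^ 2) := by
  have h1 : inner ℝ (p - q) (m • p - n • q)
      = m * ‖p‖ ^ 2 + n * ‖q‖ ^ 2 - (m + n) * inner ℝ p q := by
    simp only [inner_sub_left, inner_sub_right, real_inner_smul_right,
      real_inner_self_eq_norm_sq, real_inner_comm p q]
    ring
  have h2 : w * (m - n) = (m - n) ^ 2 - (‖p‖ ^ 2 - ‖q‖ ^ 2) * (m - n) := by
    rw [hw]
    ring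
  rw [h1, norm_sub_sq_real, mul_assoc, h2]
  ring

end QuadraticMFG

open QuadraticMFG in
/-- Uniqueness for the quadratic mean field game with
classical solutions: if `(m₁, u₁)` and `(m₂, u₂)` are `ℤᵈ`-periodic classical
solutions of `-u - ‖∇u‖² - V + m = 0`, `m - div(m ∇u) = 1` with `m ≥ 0` and
`∫_{[0,1]ᵈ} m = 1`, then `m₁ = m₂` and `u₁ = u₂`. -/
theorem quadratic_mfg_uniqueness_classical
    (d : ℕ) (hd : 1 ≤ d)
    (V : EuclideanSpace ℝ (Fin d) → ℝ)
    (hVcont : Continuous V) (hVper : ZdPeriodic V)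
    (u₁ u₂ m₁ m₂ : EuclideanSpace ℝ (Fin d) → ℝ)
    (hu₁ : ContDiff ℝ 2 u₁) (hu₂ : ContDiff ℝ 2 u₂)
    (hu₁per : ZdPeriodic u₁) (hu₂per : ZdPeriodic u₂)
    (hm₁ : ContDiff ℝ 1 m₁) (hm₂ : ContDiff ℝ 1 m₂)
    (hm₁per : ZdPeriodic m₁) (hm₂per : ZdPeriodic m₂)
    (hm₁0 : ∀ x, 0 ≤ m₁ x) (hm₂0 : ∀ x, 0 ≤ m₂ x)
    (hmass₁ : ∫ x in unitCube d, m₁ x = 1)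
    (hmass₂ : ∫ x in unitCube d, m₂ x = 1)
    (hHJ₁ : ∀ x, -u₁ x - ‖gradient u₁ x‖ ^ 2 - V x + m₁ x = 0)
    (hHJ₂ : ∀ x, -u₂ x - ‖gradient u₂ x‖ ^ 2 - V x + m₂ x = 0)
    (hFP₁ : ∀ x, m₁ x - ediv (fun y => m₁ y • gradient u₁ y) x = 1)
    (hFP₂ : ∀ x, m₂ x - ediv (fun y => m₂ y • gradient u₂ y) x = 1) :
    m₁ = m₂ ∧ u₁ = u₂ := by
  set w : EuclideanSpace ℝ (Fin d) → ℝ := fun x => u₁ x - u₂ x with hwdef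
  set G : EuclideanSpace ℝ (Fin d) → EuclideanSpace ℝ (Fin d) :=
    fun x => m₁ x • gradient u₁ x - m₂ x • gradient u₂ x with hGdef
  have hg₁ := contDiff_gradient hu₁
  have hg₂ := contDiff_gradient hu₂
  have hG₁ : ContDiff ℝ 1 fun x => m₁ x • gradient u₁ x := hm₁.smul hg₁
  have hG₂ : ContDiff ℝ 1 fun x => m₂ x • gradient u₂ x := hm₂.smul hg₂
  have hG : ContDiff ℝ 1 G := hG₁.sub hG₂
  have hw : ContDiff ℝ 1 w := (hu₁.sub hu₂).of_le (by norm_num)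
  have hv : ContDiff ℝ 1 fun x => |w x| * w x := contDiff_abs_mul_self.comp hw
  have hwx : ∀ x, w x = (m₁ x - m₂ x) - (‖gradient u₁ x‖ ^ 2 - ‖gradient u₂ x‖ ^ 2) :=
    fun x => by simp only [hwdef]; linarith [hHJ₁ x, hHJ₂ x]
  have hdivG : ∀ x, ediv G x = m₁ x - m₂ x := fun x => by
    rw [hGdef, ediv_sub (hG₁.differentiable one_ne_zero x) (hG₂.differentiable one_ne_zero x)]
    linarith [hFP₁ x, hFP₂ x]
  have hdv : ∀ x y, fderiv ℝ (fun x => |w x| * w x) x y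
      = 2 * |w x| * inner ℝ (gradient u₁ x - gradient u₂ x) y := fun x y => by
    have h1 : HasFDerivAt w (fderiv ℝ u₁ x - fderiv ℝ u₂ x) x :=
      (hu₁.differentiable two_ne_zero x).hasFDerivAt.sub
        (hu₂.differentiable two_ne_zero x).hasFDerivAt
    have h2 := (hasDerivAt_abs_mul_self (w x)).comp_hasFDerivAt x h1
    have h3 : fderiv ℝ (fun x => |w x| * w x) x
        = (2 * |w x|) • (fderiv ℝ u₁ x - fderiv ℝ u₂ x) := h2.fderiv
    rw [h3, inner_sub_left, inner_gradient_left, inner_gradient_left]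
    rfl
  have hdiv : ∀ x, ediv (fun y => (|w y| * w y) • G y) x
      = |w x| * ((m₁ x - m₂ x) ^ 2
        + (m₁ x + m₂ x) * ‖gradient u₁ x - gradient u₂ x‖ ^ 2) := fun x => by
    rw [ediv_smul (hv.differentiable one_ne_zero x) (hG.differentiable one_ne_zero x), hdivG, hdv]
    exact pointwise_identity _ _ _ _ _ (hwx x)
  have hperG : ZdPeriodic fun y => (|w y| * w y) • G y := fun x k => by
    simp only [hwdef, hGdef, hu₁per x k, hu₂per x k, hm₁per x k, hm₂per x k,
      periodic_gradient hu₁per x k, periodic_gradient hu₂per x k]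
  have hvG : ContDiff ℝ 1 fun y => (|w y| * w y) • G y := hv.smul hG
  have hint := integral_ediv_eq_zero hvG hperG
  have hcont := continuous_ediv hvG
  have hzero : ∀ x, |w x| * ((m₁ x - m₂ x) ^ 2
      + (m₁ x + m₂ x) * ‖gradient u₁ x - gradient u₂ x‖ ^ 2) = 0 := fun x => by
    rw [← hdiv x]
    refine eq_zero_of_integral_unitCube_eq_zero hcont (fun x k => ?_) (fun x => ?_) hint x
    · rw [hdiv, hdiv]
      simp only [hwdef, hu₁per x k, hu₂per x k, hm₁per x k, hm₂per x k,
        periodic_gradient hu₁per x k, periodic_gradient hu₂per x k]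
    · rw [hdiv]
      have := hm₁0 x
      have := hm₂0 x
      positivity
  have hw0 : ∀ x, w x = 0 := fun x => by
    by_contra hne
    have hpos : 0 < m₁ x + m₂ x :=
      add_pos_of_pos_of_nonneg (density_pos hu₁ hm₁ hm₁0 hFP₁ x) (hm₂0 x)
    have hsum := (mul_eq_zero.1 (hzero x)).resolve_left (abs_ne_zero.2 hne)
    have hnn : 0 ≤ (m₁ x + m₂ x) * ‖gradient u₁ x - gradient u₂ x‖ ^ 2 := by positivity
    have hδ : m₁ x - m₂ x = 0 :=
      pow_eq_zero_iff two_ne_zero |>.1 (by linarith [sq_nonneg (m₁ x - m₂ x)])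
    have hgr : gradient u₁ x = gradient u₂ x := by
      rw [hδ] at hsum
      simpa [hpos.ne', sub_eq_zero] using hsum
    apply hne
    rw [hwx x, hδ, hgr]
    ring
  have hu : u₁ = u₂ := funext fun x => sub_eq_zero.1 (hw0 x)
  refine ⟨funext fun x => ?_, hu⟩
  have h1 := hHJ₁ x
  rw [hu] at h1
  linarith [hHJ₂ x]
end
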